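/- With f(τ) := Σ_{n=1}^∞ (−1)^{n−1} n sin(2πn/3) exp(−(2π/3) n² τ) and E(τ) := e^{−πτ/6} ∏_{n=1}^∞ (1 − e^{−4πnτ}) for τ > 0, one has lim_{τ→0⁺} (8/√3) · τ · f(τ) / E(τ) = 1. (Equivalently, the exact non-disconnection probability formula P(τ) = (8τ/(√3 E(τ))) f(τ) satisfies P(τ) → 1 as τ → 0⁺.) -/

import Mathlib

open Real Filter Set

/-- `f τ = Σ_{n=1}^∞ (−1)^{n−1} n sin(2πn/3) exp(−(2π/3) n² τ)`. The `n = 0` term vanishes,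
and for `n ≥ 1` one has `(−1)^{n+1} = (−1)^{n−1}`. -/
noncomputable def f (τ : ℝ) : ℝ :=
  ∑' n : ℕ, (-1 : ℝ) ^ (n + 1) * n * Real.sin (2 * π * n / 3) * Real.exp (-(2 * π / 3) * n ^ 2 * τ)

/-- The Dedekind eta function `η(2iτ) = e^{−πτ/6} ∏_{n=1}^∞ (1 − e^{−4πnτ})`. -/
noncomputable def dedekindEta (τ : ℝ) : ℝ :=
  Real.exp (-π * τ / 6) * ∏' n : ℕ, (1 - Real.exp (-4 * π * (n + 1) * τ))

/-!
Since `(-1) ^ (n + 1) * sin (2πn / 3) = sin (2πn / 6)`, the series `f τ` is half the sine kernel of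
the Hurwitz zeta function at parameter `1 / 6` and time `2τ / 3`. Its functional equation
(Poisson summation) turns the limit at `0⁺` into the limit at infinity of
`∑ (n + a) * exp (-π * (n + a) ^ 2 * x)` with `a = 1 / 6`, where the term `n = 0` dominates because
`|a| < 1 / 2`. Likewise `η (-1 / z) = √(z / i) * η z` moves the limit of the eta function to `i∞`,
where `η z` is asymptotic to `exp (2πiz / 24)`. Both transformations produce the same factor
`√(2τ) * exp (π / (24 * τ))`, which cancels in the quotient.
-/

open Complex (I)
open HurwitzZeta
open Function.Periodic (qParam)
open scoped Topology ModularForm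

lemma tendsto_const_mul_nhdsGT_zero {𝕜 : Type*} [Field 𝕜] [LinearOrder 𝕜] [IsStrictOrderedRing 𝕜]
    [TopologicalSpace 𝕜] [OrderTopology 𝕜] {b : 𝕜} (hb : 0 < b) :
    Tendsto (b * ·) (𝓝[>] 0) (𝓝[>] 0) :=
  tendsto_iff_comap.2 (comap_mulLeft_nhdsGT_zero hb).ge

lemma tendsto_exp_smul_tsum_exp_neg_smul_atTop {ι E : Type*} [NormedAddCommGroup E]
    [NormedSpace ℝ E] [CompleteSpace E] {c : ι → E} {r : ι → ℝ} {i₀ : ι}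
    (hr : ∀ i ≠ i₀, r i₀ < r i) {x₀ : ℝ} (hs : Summable fun i ↦ exp (-r i * x₀) * ‖c i‖) :
    Tendsto (fun x ↦ exp (r i₀ * x) • ∑' i, exp (-r i * x) • c i) atTop (𝓝 (c i₀)) := by
  classical
  have exp_shift (i : ι) (x : ℝ) :
      exp (r i₀ * x) * exp (-r i * x) = exp (-(r i - r i₀) * x) := by
    rw [← exp_add]
    ring_nf
  have r_min (i : ι) : r i₀ ≤ r i := by
    obtain rfl | hi := eq_or_ne i i₀
    exacts [le_rfl, (hr i hi).le]
  simp only [← tsum_const_smul'', smul_smul, exp_shift]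
  rw [← tsum_pi_single i₀ (c i₀)]
  refine tendsto_tsum_of_dominated_convergence
    (bound := fun i ↦ exp (-(r i - r i₀) * x₀) * ‖c i‖) ?_ (fun i ↦ ?_) ?_
  · simpa only [← mul_assoc, exp_shift] using hs.mul_left (exp (r i₀ * x₀))
  · obtain rfl | hi := eq_or_ne i i₀
    · simp
    · have := tendsto_exp_atBot.comp <|
        tendsto_id.const_mul_atTop_of_neg (neg_lt_zero.2 (sub_pos.2 (hr i hi)))
      simpa [hi] using this.smul_const (c i)
  · filter_upwards [eventually_ge_atTop x₀] with x hx i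
    rw [norm_smul, norm_of_nonneg (exp_pos _).le, neg_mul, neg_mul]
    have := sub_nonneg.2 (r_min i)
    gcongr

lemma sq_lt_intCast_add_sq {a : ℝ} (ha : |a| < 1 / 2) {n : ℤ} (hn : n ≠ 0) :
    a ^ 2 < (n + a) ^ 2 := by
  have one_le_abs_n : (1 : ℝ) ≤ |(n : ℝ)| := mod_cast Int.one_le_abs hn
  have abs_n_le : |(n : ℝ)| ≤ |n + a| + |a| := by simpa using abs_sub (n + a) a
  rw [sq_lt_sq]
  linarith

lemma tendsto_exp_mul_oddKernel_atTop {a : ℝ} (ha : |a| < 1 / 2) :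
    Tendsto (fun x ↦ exp (π * a ^ 2 * x) * oddKernel a x) atTop (𝓝 a) := by
  have exponent_min : ∀ n : ℤ, n ≠ 0 → π * (((0 : ℤ) : ℝ) + a) ^ 2 < π * (n + a) ^ 2 :=
    fun n hn ↦ by simpa using mul_lt_mul_of_pos_left (sq_lt_intCast_add_sq ha hn) pi_pos
  have summable_one : Summable fun n : ℤ ↦ exp (-(π * (n + a) ^ 2) * 1) * ‖(n + a : ℝ)‖ := by
    simpa [abs_mul, mul_comm] using (hasSum_int_oddKernel a one_pos).summable.norm
  have lim := tendsto_exp_smul_tsum_exp_neg_smul_atTop exponent_min summable_one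
  rw [Int.cast_zero, zero_add] at lim
  refine lim.congr' ?_
  filter_upwards [eventually_gt_atTop 0] with x hx
  rw [← (hasSum_int_oddKernel a hx).tsum_eq, smul_eq_mul]
  simp only [smul_eq_mul, neg_mul, mul_comm]

lemma tendsto_rpow_mul_exp_mul_sinKernel_nhdsGT_zero {a : ℝ} (ha : |a| < 1 / 2) :
    Tendsto (fun t ↦ t ^ (3 / 2 : ℝ) * exp (π * a ^ 2 / t) * sinKernel a t) (𝓝[>] 0) (𝓝 a) := by
  refine ((tendsto_exp_mul_oddKernel_atTop ha).comp tendsto_inv_nhdsGT_zero).congr' ?_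
  filter_upwards [self_mem_nhdsWithin] with t ht
  rw [Function.comp_apply, oddKernel_functional_equation, inv_rpow (le_of_lt ht)]
  simp only [one_div, inv_inv]
  ring_nf

lemma f_eq_sinKernel {τ : ℝ} (hτ : 0 < τ) :
    f τ = sinKernel ((1 / 6 : ℝ) : UnitAddCircle) (2 / 3 * τ) / 2 := by
  rw [← (hasSum_nat_sinKernel (1 / 6) (by positivity : 0 < 2 / 3 * τ)).tsum_eq, ← tsum_div_const, f]
  refine tsum_congr fun n ↦ ?_
  have sin_reflect : sin (2 * π * (1 / 6) * n) = (-1) ^ (n + 1) * sin (2 * π * n / 3) := by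
    rw [show 2 * π * (1 / 6) * n = n * π - 2 * π * n / 3 by ring, sin_nat_mul_pi_sub]
    ring
  rw [sin_reflect]
  ring_nf

lemma tendsto_mul_sqrt_mul_exp_mul_f_nhdsGT_zero :
    Tendsto (fun τ ↦ τ * √(2 * τ) * exp (π / (24 * τ)) * f τ) (𝓝[>] 0) (𝓝 (√3 / 8)) := by
  have abs_lt_half : |(1 / 6 : ℝ)| < 1 / 2 := by norm_num [abs_of_pos]
  have lim := ((tendsto_rpow_mul_exp_mul_sinKernel_nhdsGT_zero abs_lt_half).comp
    (tendsto_const_mul_nhdsGT_zero (by norm_num : (0 : ℝ) < 2 / 3))).const_mul (3 * √3 / 4)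
  rw [show 3 * √3 / 4 * (1 / 6) = √3 / 8 by ring] at lim
  refine lim.congr' ?_
  filter_upwards [self_mem_nhdsWithin] with τ (hτ : 0 < τ)
  have power_eq : (2 / 3 * τ) ^ (3 / 2 : ℝ) = 2 / 3 * τ * (√(2 * τ) / √3) := by
    rw [show (3 / 2 : ℝ) = 1 + 1 / 2 by norm_num, rpow_add (by positivity), rpow_one,
      ← sqrt_eq_rpow, ← sqrt_div (by positivity), mul_div_right_comm]
  have exponent_eq : π * (1 / 6) ^ 2 / (2 / 3 * τ) = π / (24 * τ) := by
    field_simp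
    norm_num
  rw [Function.comp_apply, f_eq_sinKernel hτ, power_eq, exponent_eq]
  field_simp
  norm_num

lemma csqrt_ofReal_mul {t : ℝ} (ht : 0 ≤ t) (z : ℂ) :
    Complex.sqrt (t * z) = √t * Complex.sqrt z := by
  obtain rfl | ht := ht.eq_or_lt
  · simp
  obtain rfl | hz := eq_or_ne z 0
  · simp
  rw [sqrt_eq_exp (mul_ne_zero (mod_cast ht.ne') hz), sqrt_eq_exp hz, Complex.log_ofReal_mul ht hz,
    add_div, Complex.exp_add, ← exp_log (sqrt_pos.2 ht), log_sqrt ht.le]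
  push_cast
  rfl

lemma eta_inv_mul_I {t : ℝ} (ht : 0 < t) : η ((t : ℂ)⁻¹ * I) = √t * η (t * I) := by
  have inversion := ModularForm.eta_comp_eq_csqrt_I_inv (x := t * I) (by simpa using ht)
  have csqrt_I_ne_zero : Complex.sqrt I ≠ 0 := by simp [Complex.sqrt]
  have inv_eq : -1 / (t * I) = (t : ℂ)⁻¹ * I := by
    rw [← div_div, div_right_comm, neg_div, one_div, neg_div, div_eq_mul_inv, Complex.inv_I]
    ring
  simp only [Function.comp_apply, Pi.smul_apply, Pi.mul_apply, smul_eq_mul,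
    csqrt_ofReal_mul ht.le, inv_eq] at inversion
  rw [inversion]
  field_simp

lemma tendsto_eta_div_qParam_comap_im_atTop :
    Tendsto (fun z ↦ η z / qParam 24 z) (comap Complex.im atTop) (𝓝 1) := by
  have euler : ContinuousAt (fun q : ℂ ↦ ∏' n : ℕ, (1 - q ^ (n + 1))) 0 :=
    (ModularForm.differentiableOn_tprod_one_sub_pow.differentiableAt
      (Metric.ball_mem_nhds 0 one_pos)).continuousAt
  have q_tendsto : Tendsto (qParam 1) (comap Complex.im atTop) (𝓝 0) :=
    (Function.Periodic.qParam_tendsto one_pos).mono_right nhdsWithin_le_nhds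
  have lim := euler.tendsto.comp q_tendsto
  simp only [zero_pow (Nat.succ_ne_zero _), sub_zero, tprod_one] at lim
  refine lim.congr fun z ↦ ?_
  rw [ModularForm.eta, mul_div_cancel_left₀ _ (Function.Periodic.qParam_ne_zero z)]
  rfl

lemma tendsto_sqrt_mul_exp_mul_eta_nhdsGT_zero :
    Tendsto (fun t : ℝ ↦ √t * exp (π / (12 * t)) * η (t * I)) (𝓝[>] 0) (𝓝 1) := by
  have inv_mul_I_tendsto :
      Tendsto (fun t : ℝ ↦ (t : ℂ)⁻¹ * I) (𝓝[>] 0) (comap Complex.im atTop) := by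
    rw [tendsto_comap_iff]
    refine tendsto_inv_nhdsGT_zero.congr fun t ↦ ?_
    rw [Function.comp_apply, ← Complex.ofReal_inv, Complex.im_ofReal_mul, Complex.I_im, mul_one]
  refine (tendsto_eta_div_qParam_comap_im_atTop.comp inv_mul_I_tendsto).congr' ?_
  filter_upwards [self_mem_nhdsWithin] with t ht
  have q_inv : (qParam 24 ((t : ℂ)⁻¹ * I))⁻¹ = exp (π / (12 * t)) := by
    rw [qParam, ← Complex.exp_neg]
    push_cast
    congr 1
    linear_combination (-π / (12 * t) : ℂ) * Complex.I_sq
  rw [Function.comp_apply, div_eq_mul_inv, q_inv, eta_inv_mul_I ht]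
  ring

lemma ofReal_tprod {ι : Type*} (u : ι → ℝ) : ((∏' i, u i : ℝ) : ℂ) = ∏' i, (u i : ℂ) :=
  Complex.isometry_ofReal.isClosedEmbedding.map_tprod (g := Complex.ofRealHom) u

lemma ofReal_dedekindEta (τ : ℝ) : (dedekindEta τ : ℂ) = η (2 * τ * I) := by
  have prefactor : (exp (-π * τ / 6) : ℂ) = qParam 24 (2 * τ * I) := by
    rw [qParam]
    push_cast
    congr 1
    linear_combination (-π * τ / 6 : ℂ) * Complex.I_sq
  have factor (n : ℕ) : ((1 - exp (-4 * π * (n + 1) * τ) : ℝ) : ℂ) =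
      1 - ModularForm.eta_q n (2 * τ * I) := by
    rw [ModularForm.eta_q_eq_cexp]
    push_cast
    congr 2
    linear_combination (-4 * π * (n + 1) * τ : ℂ) * Complex.I_sq
  rw [dedekindEta, ModularForm.eta, Complex.ofReal_mul, prefactor, ofReal_tprod, tprod_congr factor]

lemma tendsto_sqrt_mul_exp_mul_dedekindEta_nhdsGT_zero :
    Tendsto (fun τ ↦ √(2 * τ) * exp (π / (24 * τ)) * dedekindEta τ) (𝓝[>] 0) (𝓝 1) := by
  have lim := tendsto_sqrt_mul_exp_mul_eta_nhdsGT_zero.comp (tendsto_const_mul_nhdsGT_zero two_pos)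
  rw [← tendsto_ofReal_iff]
  push_cast
  refine lim.congr fun τ ↦ ?_
  rw [ofReal_dedekindEta, Function.comp_apply]
  push_cast
  ring_nf

/-- The exact non-disconnection probability `P(τ) = (8τ/(√3 η(2iτ))) f(τ)` satisfies
`P(τ) → 1` as `τ → 0⁺`. -/
theorem P_tendsto_one_at_zero :
    Tendsto (fun τ : ℝ => 8 / Real.sqrt 3 * τ * f τ / dedekindEta τ)
      (nhdsWithin 0 (Ioi 0)) (nhds 1) := by
  have sqrt_three_ne_zero : √3 ≠ 0 := by positivity
  have lim := (tendsto_mul_sqrt_mul_exp_mul_f_nhdsGT_zero.div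
    tendsto_sqrt_mul_exp_mul_dedekindEta_nhdsGT_zero one_ne_zero).const_mul (8 / √3)
  rw [show 8 / √3 * (√3 / 8 / 1) = 1 by field_simp] at lim
  refine lim.congr' ?_
  filter_upwards [self_mem_nhdsWithin] with τ (hτ : 0 < τ)
  rw [Pi.div_apply]
  field_simp
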